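/- Distributional energy-momentum supported on a timelike curve (flat-space, measure-theoretic version of the Mathisson–Souriau result): let γ : ℝ → ℝ⁴ be smooth with η(γ'(t), γ'(t)) = 1 and γ'(t) future timelike for all t. Let μ be a nonzero, locally finite Borel measure on ℝ⁴ with μ(ℝ⁴ \ range γ) = 0, and let S : ℝ⁴ → Matrix (Fin 4) (Fin 4) ℝ be a Borel-measurable field such that for every p, S(p) is symmetric, satisfies the dominant energy condition, and S(p) 0 0 = 1. Suppose the pair is divergence-free in the distributional sense: for every smooth compactly supported f : ℝ⁴ → ℝ⁴, ∫_{ℝ⁴} Σₐ Σ_b (∂f b/∂p a)(p) * S(p) a b dμ(p) = 0. Then (i) γ''(t) = 0 for all t (γ is a straight timelike line), and (ii) there exists m > 0 such that for every continuous compactly supported g : ℝ⁴ → Matrix (Fin 4) (Fin 4) ℝ, ∫_{ℝ⁴} Σᵢⱼ S(p) i j * g(p) i j dμ(p) = m * ∫_ℝ Σᵢⱼ γ'(t) i * γ'(t) j * g(γ(t)) i j dt. -/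

import Mathlib

open Matrix MeasureTheory Filter Topology

noncomputable section

abbrev Vec4 : Type := Fin 4 → ℝ
abbrev Mat4 : Type := Matrix (Fin 4) (Fin 4) ℝ

/-- The Minkowski inner product on ℝ⁴. -/
def mink (x y : Vec4) : ℝ := x 0 * y 0 - x 1 * y 1 - x 2 * y 2 - x 3 * y 3

/-- The matrix diag(1,-1,-1,-1). -/
def E : Mat4 := Matrix.diagonal ![1, -1, -1, -1]

def FutureCausal (x : Vec4) : Prop := 0 ≤ mink x x ∧ 0 ≤ x 0
def FutureTimelike (x : Vec4) : Prop := 0 < mink x x ∧ 0 < x 0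
def FutureNull (x : Vec4) : Prop := x ≠ 0 ∧ mink x x = 0 ∧ 0 < x 0
def UnitTimelike (x : Vec4) : Prop := FutureTimelike x ∧ mink x x = 1

/-- The dominant energy condition for a matrix. -/
def DEC (T : Mat4) : Prop :=
  ∀ ξ ζ : Vec4, FutureCausal ξ → FutureCausal ζ → 0 ≤ ∑ i, ∑ j, ξ i * T i j * ζ j

/-- ⟨T, x⟩ = Σᵢⱼ T i j * x i j. -/
def minner (T x : Mat4) : ℝ := ∑ i, ∑ j, T i j * x i j

/-- The cone D of finite sums of symmetrized products of future causal vectors. -/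
def coneD : Set Mat4 :=
  { x | ∃ (n : ℕ) (ξ ζ : Fin n → Vec4),
      (∀ k, FutureCausal (ξ k)) ∧ (∀ k, FutureCausal (ζ k)) ∧
      x = ∑ k, (1/2 : ℝ) • (vecMulVec (ξ k) (ζ k) + vecMulVec (ζ k) (ξ k)) }

/-- A symmetric matrix is generic if it lies in the interior of D, taken within
the space of symmetric matrices. -/
def Generic (x : Mat4) : Prop :=
  ∃ h : xᵀ = x, (⟨x, h⟩ : { A : Mat4 // Aᵀ = A }) ∈
    interior { A : { A : Mat4 // Aᵀ = A } | A.val ∈ coneD }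

/-- Partial derivative in the a-th coordinate direction. -/
def pd (a : Fin 4) (f : Vec4 → ℝ) (p : Vec4) : ℝ := fderiv ℝ f p (Pi.single a 1)

def SmoothMatField (T : Vec4 → Mat4) : Prop := ∀ a b, ContDiff ℝ (⊤ : ℕ∞) fun p => T p a b
def SymValued (T : Vec4 → Mat4) : Prop := ∀ p, (T p)ᵀ = T p
def DivFree (T : Vec4 → Mat4) : Prop := ∀ p b, ∑ a, pd a (fun q => T q a b) p = 0

/-- A collection of fields tracks a curve. -/
def Tracks (C : Set (Vec4 → Mat4)) (γ : ℝ → Vec4) : Prop :=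
  ∀ x : Vec4 → Mat4, SmoothMatField x → HasCompactSupport x → SymValued x →
    (∃ O : Set Vec4, IsOpen O ∧ Set.range γ ⊆ O ∧ ∀ p ∈ O, x p ∈ coneD) →
    (∃ t₀ : ℝ, Generic (x (γ t₀))) →
    ∃ T ∈ C, 0 < ∫ p, minner (T p) (x p)

/-- Maxwell stress-energy tensor of a field strength matrix. -/
def maxwellT (F : Mat4) : Mat4 :=
  F * E * F - ((1/4 : ℝ) * (E * F * E * F).trace) • E

/-- Source-free Maxwell equations. -/
def SolvesMaxwell (F : Vec4 → Mat4) : Prop :=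
  (∀ p b, ∑ a, E a a * pd a (fun q => F q a b) p = 0) ∧
  (∀ p a b c, pd a (fun q => F q b c) p + pd b (fun q => F q c a) p
      + pd c (fun q => F q a b) p = 0)

/-- Klein–Gordon stress-energy tensor. -/
def kgT (φ : Vec4 → ℝ) (m : ℝ) (p : Vec4) : Mat4 :=
  Matrix.of fun a b =>
    pd a φ p * pd b φ p
      - (1/2 : ℝ) * E a b * ((∑ c, E c c * (pd c φ p)^2) - m^2 * (φ p)^2)

/-- Mass-m Klein–Gordon equation. -/
def SolvesKG (φ : Vec4 → ℝ) (m : ℝ) : Prop :=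
  ∀ p, pd 0 (pd 0 φ) p - pd 1 (pd 1 φ) p - pd 2 (pd 2 φ) p - pd 3 (pd 3 φ) p
    + m^2 * φ p = 0

/-- Locally finite measures which integrate all test functions equally coincide. -/
theorem measure_eq_of_integral_contDiff_eq {V : Type*} [NormedAddCommGroup V] [NormedSpace ℝ V]
    [FiniteDimensional ℝ V] [MeasurableSpace V] [BorelSpace V] {ν ν' : Measure V}
    [IsLocallyFiniteMeasure ν] [IsLocallyFiniteMeasure ν']
    (h : ∀ g : V → ℝ, ContDiff ℝ (⊤ : ℕ∞) g → HasCompactSupport g →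
      ∫ x, g x ∂ν = ∫ x, g x ∂ν') : ν = ν' := by
  have : ProperSpace V := FiniteDimensional.proper ℝ V
  have hac : ν ≪ ν + ν' := Measure.le_add_right le_rfl |>.absolutelyContinuous
  have hac' : ν' ≪ ν + ν' := Measure.le_add_left le_rfl |>.absolutelyContinuous
  have hloc : ∀ κ : Measure V, IsLocallyFiniteMeasure κ →
      LocallyIntegrable (fun x => (κ.rnDeriv (ν + ν') x).toReal) (ν + ν') := by
    intro κ _ x
    obtain ⟨s, hs, hs'⟩ := κ.finiteAt_nhds x
    exact ⟨s, hs, Measure.integrableOn_toReal_rnDeriv hs'.ne⟩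
  have key := ae_eq_of_integral_contDiff_smul_eq (hloc ν inferInstance) (hloc ν' inferInstance)
    (fun g hg hgc => by
      calc ∫ x, g x • (ν.rnDeriv (ν + ν') x).toReal ∂(ν + ν') = ∫ x, g x ∂ν := by
            rw [← integral_rnDeriv_smul hac]
            exact integral_congr_ae (.of_forall fun x => mul_comm _ _)
        _ = ∫ x, g x ∂ν' := h g hg hgc
        _ = ∫ x, g x • (ν'.rnDeriv (ν + ν') x).toReal ∂(ν + ν') := by
            rw [← integral_rnDeriv_smul hac']
            exact integral_congr_ae (.of_forall fun x => mul_comm _ _))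
  have hae : ν.rnDeriv (ν + ν') =ᵐ[ν + ν'] ν'.rnDeriv (ν + ν') := by
    filter_upwards [key, Measure.rnDeriv_lt_top ν (ν + ν'), Measure.rnDeriv_lt_top ν' (ν + ν')]
      with x hx h1 h2
    exact (ENNReal.toReal_eq_toReal_iff' h1.ne h2.ne).1 hx
  exact (Measure.withDensity_rnDeriv_eq ν (ν + ν') hac).symm.trans
    ((withDensity_congr_ae hae).trans (Measure.withDensity_rnDeriv_eq ν' (ν + ν') hac'))

/-- A test function on the line with zero integral is the derivative of a test function. -/
theorem exists_deriv_eq_of_integral_eq_zero {k : ℝ → ℝ} (hk : ContDiff ℝ (⊤ : ℕ∞) k)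
    (hkc : HasCompactSupport k) (h0 : ∫ x, k x = 0) :
    ∃ ψ : ℝ → ℝ, ContDiff ℝ (⊤ : ℕ∞) ψ ∧ HasCompactSupport ψ ∧ deriv ψ = k := by
  obtain ⟨R, hR⟩ := hkc.isCompact.isBounded.subset_closedBall 0
  have hzero : ∀ x, R < |x| → k x = 0 := fun x hx => by
    by_contra hne
    have := hR (subset_tsupport k hne)
    rw [mem_closedBall_zero_iff, Real.norm_eq_abs] at this
    linarith
  have hd : ∀ x, HasDerivAt (fun u => ∫ t in (-(|R| + 1))..u, k t) (k x) x := fun x =>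
    intervalIntegral.integral_hasDerivAt_right (hk.continuous.intervalIntegrable _ _)
      hk.continuous.stronglyMeasurable.stronglyMeasurableAtFilter hk.continuous.continuousAt
  have hderiv : deriv (fun u => ∫ t in (-(|R| + 1))..u, k t) = k := funext fun x => (hd x).deriv
  refine ⟨fun u => ∫ t in (-(|R| + 1))..u, k t, ?_, ?_, hderiv⟩
  · rw [contDiff_infty_iff_deriv, hderiv]
    exact ⟨fun x => (hd x).differentiableAt, hk⟩
  · refine HasCompactSupport.intro (isCompact_closedBall (0 : ℝ) (|R| + 1)) fun x hx => ?_
    rw [mem_closedBall_zero_iff, Real.norm_eq_abs, not_le] at hx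
    have hRle := le_abs_self R
    rcases lt_abs.1 hx with hx | hx
    · rw [intervalIntegral.integral_eq_integral_of_support_subset, h0]
      intro y hy
      by_contra hn
      refine hy (hzero y ?_)
      rw [Set.mem_Ioc, not_and_or, not_lt, not_le] at hn
      rcases hn with hn | hn
      · exact lt_abs.2 (Or.inr (by linarith))
      · exact lt_abs.2 (Or.inl (by linarith))
    · rw [intervalIntegral.integral_symm, neg_eq_zero]
      refine intervalIntegral.integral_zero_ae (Eventually.of_forall fun y hy => hzero y ?_)
      rw [Set.uIoc_of_le (by linarith)] at hy
      exact lt_abs.2 (Or.inr (by linarith [hy.2]))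

/-- A locally finite measure on the line with zero distributional derivative is a multiple of
Lebesgue measure. -/
theorem exists_eq_smul_volume_of_integral_deriv_eq_zero {ν : Measure ℝ} [IsLocallyFiniteMeasure ν]
    (h : ∀ ψ : ℝ → ℝ, ContDiff ℝ (⊤ : ℕ∞) ψ → HasCompactSupport ψ → ∫ x, deriv ψ x ∂ν = 0) :
    ∃ c : NNReal, ν = c • volume := by
  let B : ContDiffBump (0 : ℝ) := ⟨1, 2, one_pos, one_lt_two⟩
  have hB : ContDiff ℝ (⊤ : ℕ∞) (B.normed volume) := B.contDiff_normed
  have hBc : HasCompactSupport (B.normed volume) := B.hasCompactSupport_normed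
  have hnn : 0 ≤ ∫ x, B.normed volume x ∂ν := integral_nonneg fun x => B.nonneg_normed x
  obtain ⟨c, hc⟩ : ∃ c : NNReal, (c : ℝ) = ∫ x, B.normed volume x ∂ν := ⟨⟨_, hnn⟩, rfl⟩
  refine ⟨c, measure_eq_of_integral_contDiff_eq fun g hg hgc => ?_⟩
  rw [integral_smul_nnreal_measure]
  obtain ⟨ψ, hψ, hψc, hψd⟩ := exists_deriv_eq_of_integral_eq_zero
    (k := fun x => g x - (∫ y, g y) * B.normed volume x) (hg.sub (contDiff_const.mul hB))
    (hgc.sub (hBc.mul_left (f := fun _ => ∫ y, g y))) (by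
      rw [integral_sub (hg.continuous.integrable_of_hasCompactSupport hgc)
        ((hB.continuous.integrable_of_hasCompactSupport hBc).const_mul _), integral_const_mul,
        B.integral_normed, mul_one, sub_self])
  have e := h ψ hψ hψc
  rw [hψd, integral_sub (hg.continuous.integrable_of_hasCompactSupport hgc)
    ((hB.continuous.integrable_of_hasCompactSupport hBc).const_mul _), integral_const_mul,
    sub_eq_zero] at e
  rw [e, NNReal.smul_def, smul_eq_mul, mul_comm, hc]

/-- A smooth function on the line with zero distributional derivative has zero derivative. -/
theorem deriv_eq_zero_of_integral_deriv_mul_eq_zero {w : ℝ → ℝ} (hw : ContDiff ℝ (⊤ : ℕ∞) w)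
    (h : ∀ ψ : ℝ → ℝ, ContDiff ℝ (⊤ : ℕ∞) ψ → HasCompactSupport ψ → ∫ x, deriv ψ x * w x = 0) :
    deriv w = 0 := by
  have hw' : Continuous (deriv w) := hw.continuous_deriv (by simp)
  have key := ae_eq_zero_of_integral_contDiff_smul_eq_zero (μ := volume) hw'.locallyIntegrable
    (fun ψ hψ hψc => by
      have hψ' : Continuous (deriv ψ) := hψ.continuous_deriv (by simp)
      have i1 : Integrable (fun x => deriv ψ x * w x) :=
        (hψ'.mul hw.continuous).integrable_of_hasCompactSupport hψc.deriv.mul_right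
      have i2 : Integrable (fun x => ψ x * deriv w x) :=
        (hψ.continuous.mul hw').integrable_of_hasCompactSupport hψc.mul_right
      have i3 : Integrable (fun x => ψ x * w x) :=
        (hψ.continuous.mul hw.continuous).integrable_of_hasCompactSupport hψc.mul_right
      have e := integral_eq_zero_of_hasDerivAt_of_integrable
        (fun x => (hψ.differentiable (by simp) x).hasDerivAt.mul
          (hw.differentiable (by simp) x).hasDerivAt) (i1.add i2) i3
      rw [integral_add i1 i2, h ψ hψ hψc, zero_add] at e
      exact e)
  exact Measure.eq_of_ae_eq (μ := volume) key hw' continuous_zero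

theorem futureCausal_add_single {s : ℝ} (hs : |s| ≤ 1) (i : Fin 4) :
    FutureCausal (Pi.single 0 1 + s • Pi.single i 1) := by
  have h := abs_le.1 hs
  have h2 : s * s ≤ 1 := by nlinarith
  constructor
  · fin_cases i <;> simp [mink] <;> nlinarith
  · fin_cases i <;> simp
    linarith

/-- The dominant energy condition bounds every component by the energy density. -/
theorem abs_apply_le_of_dec {T : Mat4} (hT : DEC T) (h0 : T 0 0 = 1) (i j : Fin 4) :
    |T i j| ≤ 1 := by
  have key : ∀ s t : ℝ, |s| ≤ 1 → |t| ≤ 1 →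
      0 ≤ 1 + t * T 0 j + s * T i 0 + s * t * T i j := by
    intro s t hs ht
    have := hT _ _ (futureCausal_add_single hs i) (futureCausal_add_single ht j)
    simp only [Pi.add_apply, Pi.smul_apply, smul_eq_mul, add_mul, mul_add,
      Finset.sum_add_distrib, Pi.single_apply, mul_ite, ite_mul, mul_one, one_mul, mul_zero,
      zero_mul, Finset.sum_ite_eq', Finset.mem_univ, if_true, h0] at this
    linarith
  have h1 : |(1 : ℝ)| ≤ 1 := by simp
  have h2 : |(-1 : ℝ)| ≤ 1 := by simp
  rw [abs_le]
  constructor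
  · linarith [key 1 1 h1 h1, key (-1) (-1) h2 h2]
  · linarith [key 1 (-1) h1 h2, key (-1) 1 h2 h1]

theorem pd_mul {f g : Vec4 → ℝ} {p : Vec4} (hf : DifferentiableAt ℝ f p)
    (hg : DifferentiableAt ℝ g p) (a : Fin 4) :
    pd a (fun q => f q * g q) p = f p * pd a g p + g p * pd a f p := by
  simp [pd, fderiv_fun_mul hf hg]

theorem pd_comp_time {ψ : ℝ → ℝ} {p : Vec4} (hψ : DifferentiableAt ℝ ψ (p 0)) (a : Fin 4) :
    pd a (fun q => ψ (q 0)) p = deriv ψ (p 0) * (Pi.single a 1 : Vec4) 0 := by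
  have h := hψ.hasDerivAt.comp_hasFDerivAt p (hasFDerivAt_apply (𝕜 := ℝ) (0 : Fin 4) p)
  have e : fderiv ℝ (fun q : Vec4 => ψ (q 0)) p = _ := h.fderiv
  simp [pd, e]

theorem pd_sub_comp_time {w : ℝ → ℝ} {p : Vec4} (hw : DifferentiableAt ℝ w (p 0))
    (a i : Fin 4) :
    pd a (fun q => q i - w (q 0)) p
      = (Pi.single a 1 : Vec4) i - deriv w (p 0) * (Pi.single a 1 : Vec4) 0 := by
  have h := (hasFDerivAt_apply (𝕜 := ℝ) i p).sub
    (hw.hasDerivAt.comp_hasFDerivAt p (hasFDerivAt_apply (𝕜 := ℝ) (0 : Fin 4) p))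
  have e : fderiv ℝ (fun q : Vec4 => q i - w (q 0)) p = _ := h.fderiv
  simp [pd, e]

/-- Componentwise form of the distributional divergence equation. -/
theorem integral_sum_pd_mul_eq_zero {μ : Measure Vec4} {S : Vec4 → Mat4}
    (hdiv : ∀ f : Vec4 → Vec4, (∀ a : Fin 4, ContDiff ℝ (⊤ : ℕ∞) fun p => f p a) →
      HasCompactSupport f →
      ∫ p, (∑ a, ∑ b, pd a (fun q => f q b) p * S p a b) ∂μ = 0)
    {f : Vec4 → ℝ} (hf : ContDiff ℝ (⊤ : ℕ∞) f) (hfc : HasCompactSupport f) (c : Fin 4) :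
    ∫ p, (∑ a, pd a f p * S p a c) ∂μ = 0 := by
  rw [← hdiv (fun p => Pi.single c (f p))]
  · refine integral_congr_ae (.of_forall fun p => Finset.sum_congr rfl fun a _ => ?_)
    rw [Finset.sum_eq_single c]
    · simp
    · intro b _ hb
      simp [hb, pd]
    · simp
  · intro a
    by_cases h : a = c
    · subst h
      simpa using hf
    · simpa [h] using contDiff_const
  · exact hfc.comp_left (g := fun x => (Pi.single c x : Vec4)) (by simp)

/-- Testing the divergence equation against fields vanishing on the curve `σ`, parametrized by
coordinate time, shows that the columns of `S` are tangent to the curve. -/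
theorem ae_apply_eq_deriv_mul {σ : ℝ → Vec4} (hσ : ∀ i, ContDiff ℝ (⊤ : ℕ∞) fun s => σ s i)
    {μ : Measure Vec4} [IsLocallyFiniteMeasure μ] (hμ : ∀ᵐ p ∂μ, σ (p 0) = p)
    {S : Vec4 → Mat4} (hmeas : ∀ a b : Fin 4, Measurable fun p => S p a b)
    (hdec : ∀ p, DEC (S p)) (hnorm : ∀ p, S p 0 0 = 1)
    (hdiv : ∀ f : Vec4 → Vec4, (∀ a : Fin 4, ContDiff ℝ (⊤ : ℕ∞) fun p => f p a) →
      HasCompactSupport f →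
      ∫ p, (∑ a, ∑ b, pd a (fun q => f q b) p * S p a b) ∂μ = 0) (i c : Fin 4) :
    ∀ᵐ p ∂μ, S p i c = deriv (fun s => σ s i) (p 0) * S p 0 c := by
  have hS : ∀ a b, LocallyIntegrable (fun p => S p a b) μ := fun a b =>
    (locallyIntegrable_const (1 : ℝ)).mono (hmeas a b).aestronglyMeasurable
      (.of_forall fun p => by simpa using abs_apply_le_of_dec (hdec p) (hnorm p) a b)
  have hw' : Continuous (fun p : Vec4 => deriv (fun s => σ s i) (p 0)) :=
    ((hσ i).continuous_deriv (by simp)).comp (continuous_apply 0)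
  have hloc : LocallyIntegrable
      (fun p => S p i c - deriv (fun s => σ s i) (p 0) * S p 0 c) μ :=
    (hS i c).sub ((hS 0 c).continuous_mul hw')
  refine (ae_eq_zero_of_integral_contDiff_smul_eq_zero hloc fun φ hφ hφc => ?_).mono
    fun p hp => sub_eq_zero.1 hp
  have hh : ContDiff ℝ (⊤ : ℕ∞) (fun q : Vec4 => q i - σ (q 0) i) :=
    (contDiff_apply ℝ ℝ i).sub ((hσ i).comp (contDiff_apply ℝ ℝ 0))
  rw [← integral_sum_pd_mul_eq_zero hdiv (hφ.mul hh) hφc.mul_right c]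
  refine integral_congr_ae ?_
  filter_upwards [hμ] with p hp
  have hz : p i - σ (p 0) i = 0 := by rw [hp, sub_self]
  simp only [pd_mul (hφ.differentiable (by simp) p) (hh.differentiable (by simp) p),
    pd_sub_comp_time ((hσ i).differentiable (by simp) (p 0)), hz, zero_mul, add_zero]
  simp [Pi.single_apply, mul_sub, sub_mul, Finset.sum_sub_distrib, mul_assoc]

/-- A test function of coordinate time extends, off the curve `σ`, to a test function on
spacetime. -/
theorem exists_contDiff_eventuallyEq_comp_time {σ : ℝ → Vec4} (hσ : Continuous σ)
    {ψ : ℝ → ℝ} (hψ : ContDiff ℝ (⊤ : ℕ∞) ψ) (hψc : HasCompactSupport ψ) :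
    ∃ f : Vec4 → ℝ, ContDiff ℝ (⊤ : ℕ∞) f ∧ HasCompactSupport f ∧
      ∀ p, σ (p 0) = p → f =ᶠ[𝓝 p] fun q => ψ (q 0) := by
  obtain ⟨R, hR⟩ := (hψc.isCompact.image hσ).isBounded.subset_ball 0
  let χ : ContDiffBump (0 : Vec4) :=
    ⟨max R 1, max R 1 + 1, lt_max_of_lt_right one_pos, lt_add_one _⟩
  refine ⟨fun q => ψ (q 0) * χ q, (hψ.comp (contDiff_apply ℝ ℝ 0)).mul χ.contDiff,
    χ.hasCompactSupport.mul_left, fun p hp => ?_⟩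
  by_cases h : p 0 ∈ tsupport ψ
  · have hb : p ∈ Metric.ball (0 : Vec4) χ.rIn :=
      Metric.ball_subset_ball (le_max_left R 1) (hR ⟨p 0, h, hp⟩)
    filter_upwards [χ.eventuallyEq_one_of_mem_ball hb] with q hq
    simp [hq]
  · have h0 := (notMem_tsupport_iff_eventuallyEq.1 h)
    filter_upwards [(continuous_apply (0 : Fin 4)).continuousAt.eventually h0] with q hq
    simp only [Pi.zero_apply] at hq
    simp [hq]

/-- A divergence-free energy-momentum distribution carried by a curve parametrized by coordinate
time forces the curve to be straight, and is a constant multiple of the tensor square of its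
tangent. -/
theorem energy_momentum_on_graph {σ : ℝ → Vec4} (hσ : ∀ i, ContDiff ℝ (⊤ : ℕ∞) fun s => σ s i)
    (hσ0 : ∀ s, σ s 0 = s)
    {μ : Measure Vec4} [IsLocallyFiniteMeasure μ] (hμ0 : μ ≠ 0) (hμ : ∀ᵐ p ∂μ, σ (p 0) = p)
    {S : Vec4 → Mat4} (hmeas : ∀ a b : Fin 4, Measurable fun p => S p a b)
    (hsym : ∀ p, (S p)ᵀ = S p) (hdec : ∀ p, DEC (S p)) (hnorm : ∀ p, S p 0 0 = 1)
    (hdiv : ∀ f : Vec4 → Vec4, (∀ a : Fin 4, ContDiff ℝ (⊤ : ℕ∞) fun p => f p a) →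
      HasCompactSupport f →
      ∫ p, (∑ a, ∑ b, pd a (fun q => f q b) p * S p a b) ∂μ = 0) :
    ∃ v : Vec4, (∀ s i, HasDerivAt (fun s => σ s i) (v i) s) ∧ ∃ c : ℝ, 0 < c ∧
      ∀ g : Vec4 → Mat4, (∀ a b : Fin 4, Continuous fun p => g p a b) →
        ∫ p, (∑ i, ∑ j, S p i j * g p i j) ∂μ
          = c * ∫ s : ℝ, ∑ i, ∑ j, v i * v j * g (σ s) i j := by
  have hσc : Continuous σ := continuous_pi fun i => (hσ i).continuous
  have hS1 : ∀ᵐ p ∂μ, ∀ i c, S p i c = deriv (fun s => σ s i) (p 0) * S p 0 c :=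
    ae_all_iff.2 fun i => ae_all_iff.2 fun c =>
      ae_apply_eq_deriv_mul hσ hμ hmeas hdec hnorm hdiv i c
  have hS0 : ∀ᵐ p ∂μ, ∀ j, S p 0 j = deriv (fun s => σ s j) (p 0) := by
    filter_upwards [hS1] with p hp j
    rw [← congrFun (congrFun (hsym p) 0) j, Matrix.transpose_apply, hp, hnorm, mul_one]
  have hw : ∀ i, ContDiff ℝ (⊤ : ℕ∞) (deriv fun s => σ s i) := fun i =>
    (contDiff_infty_iff_deriv.1 (hσ i)).2
  have hpush : ∀ u : ℝ → ℝ, Continuous u → ∫ s, u s ∂(μ.map fun p => p 0) = ∫ p, u (p 0) ∂μ :=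
    fun u hu => integral_map (measurable_pi_apply 0).aemeasurable hu.aestronglyMeasurable
  have hν : IsLocallyFiniteMeasure (μ.map fun p : Vec4 => p 0) := by
    refine ⟨fun s => ⟨Metric.closedBall s 1, Metric.closedBall_mem_nhds s one_pos, ?_⟩⟩
    rw [Measure.map_apply (measurable_pi_apply 0) Metric.isClosed_closedBall.measurableSet]
    refine lt_of_le_of_lt (measure_mono_ae ?_)
      ((isCompact_closedBall s 1).image hσc).measure_lt_top
    filter_upwards [hμ] with p hp hps
    exact ⟨p 0, hps, hp⟩
  have htest : ∀ ψ : ℝ → ℝ, ContDiff ℝ (⊤ : ℕ∞) ψ → HasCompactSupport ψ → ∀ i,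
      ∫ s, deriv ψ s * deriv (fun s => σ s i) s ∂(μ.map fun p => p 0) = 0 := by
    intro ψ hψ hψc i
    obtain ⟨f, hf, hfc, hfe⟩ := exists_contDiff_eventuallyEq_comp_time hσc hψ hψc
    have hcont : Continuous fun s => deriv ψ s * deriv (fun s => σ s i) s :=
      (hψ.continuous_deriv (by simp)).mul (hw i).continuous
    rw [hpush _ hcont,
      ← integral_sum_pd_mul_eq_zero hdiv hf hfc i]
    refine integral_congr_ae ?_
    filter_upwards [hμ, hS0] with p hp hp0
    have hpd : ∀ a, pd a f p = deriv ψ (p 0) * (Pi.single a 1 : Vec4) 0 := fun a => by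
      rw [← pd_comp_time (hψ.differentiable (by simp) (p 0)), pd, pd, (hfe p hp).fderiv_eq]
    simp [hpd, Pi.single_apply, hp0]
  have hσ0' : deriv (fun s => σ s 0) = fun _ => 1 := by
    funext s
    simp [hσ0]
  obtain ⟨c, hc⟩ := exists_eq_smul_volume_of_integral_deriv_eq_zero
    (ν := μ.map fun p : Vec4 => p 0) fun ψ hψ hψc => by simpa [hσ0'] using htest ψ hψ hψc 0
  have hc0 : c ≠ 0 := by
    rintro rfl
    rw [zero_smul, Measure.map_eq_zero_iff (measurable_pi_apply 0).aemeasurable] at hc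
    exact hμ0 hc
  have hconst : ∀ i s, deriv (fun s => σ s i) s = deriv (fun s => σ s i) 0 := fun i s => by
    refine is_const_of_deriv_eq_zero ((hw i).differentiable (by simp)) (fun x => ?_) s 0
    refine congrFun (deriv_eq_zero_of_integral_deriv_mul_eq_zero (hw i) fun ψ hψ hψc => ?_) x
    have e := htest ψ hψ hψc i
    rw [hc, integral_smul_nnreal_measure, smul_eq_zero] at e
    exact e.resolve_left hc0
  refine ⟨fun i => deriv (fun s => σ s i) 0, fun s i => ?_, c, by positivity, fun g hg => ?_⟩
  · refine HasDerivAt.congr_deriv ?_ (hconst i s)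
    exact ((hσ i).differentiable (by simp) s).hasDerivAt
  · have hcont : Continuous fun s => ∑ i, ∑ j,
        deriv (fun s => σ s i) 0 * deriv (fun s => σ s j) 0 * g (σ s) i j :=
      continuous_finsetSum _ fun i _ => continuous_finsetSum _ fun j _ =>
        continuous_const.mul ((hg i j).comp hσc)
    have e := hpush _ hcont
    rw [hc, integral_smul_nnreal_measure, NNReal.smul_def, smul_eq_mul] at e
    rw [e]
    refine integral_congr_ae ?_
    filter_upwards [hμ, hS1, hS0] with p hp hp1 hp0
    refine Finset.sum_congr rfl fun i _ => Finset.sum_congr rfl fun j _ => ?_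
    rw [hp1 i j, hp0 j, hconst i, hconst j, hp]

/-- A smooth function on the line with derivative at least one has a smooth inverse. -/
theorem exists_smooth_inverse_of_one_le_deriv {θ θ' : ℝ → ℝ} (hθ : ContDiff ℝ (⊤ : ℕ∞) θ)
    (hθ' : ∀ t, HasDerivAt θ (θ' t) t) (h1 : ∀ t, 1 ≤ θ' t) :
    ∃ τ : ℝ → ℝ, ContDiff ℝ (⊤ : ℕ∞) τ ∧ (∀ t, τ (θ t) = t) ∧ ∀ s, θ (τ s) = s := by
  have hmono : StrictMono θ := strictMono_of_deriv_pos fun t => by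
    rw [(hθ' t).deriv]
    linarith [h1 t]
  have hgrow := mul_sub_le_image_sub_of_le_deriv (hθ.differentiable (by simp)) (C := 1)
    fun t => by rw [(hθ' t).deriv]; exact h1 t
  have htop : Tendsto θ atTop atTop :=
    tendsto_atTop_mono' _ ((eventually_ge_atTop 0).mono fun t ht => by
      rw [id]
      linarith [hgrow ht])
      (tendsto_atTop_add_const_right atTop (θ 0) tendsto_id)
  have hbot : Tendsto θ atBot atBot :=
    tendsto_atBot_mono' _ ((eventually_le_atBot 0).mono fun t ht => by
      rw [id]
      linarith [hgrow ht])
      (tendsto_atBot_add_const_right atBot (θ 0) tendsto_id)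
  let e : ℝ ≃ₜ ℝ :=
    (hmono.orderIsoOfSurjective θ (hθ.continuous.surjective htop hbot)).toHomeomorph
  exact ⟨e.symm, e.contDiff_symm_deriv (f' := θ') (fun t => by linarith [h1 t]) hθ' hθ,
    e.symm_apply_apply, e.apply_symm_apply⟩

/-- Distributional energy-momentum supported on a timelike curve. -/
theorem distributional_energy_momentum_on_curve (γ : ℝ → Vec4) (hγ : ContDiff ℝ (⊤ : ℕ∞) γ)
    (hunit : ∀ t : ℝ, mink (deriv γ t) (deriv γ t) = 1)
    (htl : ∀ t : ℝ, FutureTimelike (deriv γ t))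
    (μ : Measure Vec4) [IsLocallyFiniteMeasure μ] (hμ0 : μ ≠ 0)
    (hμsupp : μ (Set.range γ)ᶜ = 0)
    (S : Vec4 → Mat4) (hmeas : ∀ a b : Fin 4, Measurable fun p => S p a b)
    (hsym : ∀ p, (S p)ᵀ = S p) (hdec : ∀ p, DEC (S p)) (hnorm : ∀ p, S p 0 0 = 1)
    (hdiv : ∀ f : Vec4 → Vec4, (∀ a : Fin 4, ContDiff ℝ (⊤ : ℕ∞) fun p => f p a) →
      HasCompactSupport f →
      ∫ p, (∑ a, ∑ b, pd a (fun q => f q b) p * S p a b) ∂μ = 0) :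
    (∀ t : ℝ, deriv (deriv γ) t = 0) ∧
    ∃ m : ℝ, 0 < m ∧
      ∀ g : Vec4 → Mat4, (∀ a b : Fin 4, Continuous fun p => g p a b) →
        HasCompactSupport g →
        ∫ p, (∑ i, ∑ j, S p i j * g p i j) ∂μ
          = m * ∫ t : ℝ, ∑ i, ∑ j, deriv γ t i * deriv γ t j * g (γ t) i j := by
  have hd : ∀ t, HasDerivAt γ (deriv γ t) t := fun t =>
    (hγ.differentiable (by simp) t).hasDerivAt
  have hdi : ∀ i t, HasDerivAt (fun t => γ t i) (deriv γ t i) t := fun i t =>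
    hasDerivAt_pi.1 (hd t) i
  have h1 : ∀ t, 1 ≤ deriv γ t 0 := fun t => by
    have h := hunit t
    unfold mink at h
    nlinarith [(htl t).2, sq_nonneg (deriv γ t 1), sq_nonneg (deriv γ t 2),
      sq_nonneg (deriv γ t 3)]
  obtain ⟨τ, hτ, hτl, hτr⟩ := exists_smooth_inverse_of_one_le_deriv
    (contDiff_pi.1 hγ 0) (hdi 0) h1
  have hμ : ∀ᵐ p ∂μ, γ (τ (p 0)) = p := by
    filter_upwards [measure_eq_zero_iff_ae_notMem.1 hμsupp] with p hp
    obtain ⟨t, rfl⟩ := not_not.1 hp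
    rw [hτl]
  obtain ⟨v, hv, c, hc, hint⟩ := energy_momentum_on_graph (σ := fun s => γ (τ s))
    (fun i => (contDiff_pi.1 hγ i).comp hτ) hτr hμ0 hμ hmeas hsym hdec hnorm hdiv
  have hγv : ∀ t i, deriv γ t i = v i * deriv γ t 0 := fun t i => by
    refine (hdi i t).unique ?_
    simpa only [Function.comp_def, hτl] using (hv (γ t 0) i).comp t (hdi 0 t)
  have hvv : ∀ t, mink v v * deriv γ t 0 ^ 2 = 1 := fun t => by
    rw [← hunit t]
    unfold mink
    rw [hγv t 1, hγv t 2, hγv t 3]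
    have h0 := hγv t 0
    linear_combination (-deriv γ t 0 - v 0 * deriv γ t 0) * h0
  have ha : ∀ t, deriv γ t 0 = deriv γ 0 0 := fun t => by
    have h := hvv t
    have h' := hvv 0
    have hne : mink v v ≠ 0 := fun h0 => by simp [h0] at h
    have hsq : deriv γ t 0 ^ 2 = deriv γ 0 0 ^ 2 := mul_left_cancel₀ hne (h.trans h'.symm)
    exact (pow_left_inj₀ (by linarith [h1 t]) (by linarith [h1 0]) two_ne_zero).1 hsq
  have hconst : ∀ t, deriv γ t = deriv γ 0 := fun t => by
    funext i
    rw [hγv t i, hγv 0 i, ha t]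
  refine ⟨fun t => ?_, c / deriv γ 0 0,
    div_pos hc (by linarith [h1 0]), fun g hg _ => ?_⟩
  · rw [show deriv γ = fun _ => deriv γ 0 from funext hconst, deriv_const]
  have hpos : 0 < deriv γ 0 0 := by linarith [h1 0]
  have haff : ∀ t, γ t 0 = deriv γ 0 0 * t + γ 0 0 := fun t => by
    have h := is_const_of_deriv_eq_zero (f := fun t => γ t 0 - deriv γ 0 0 * t)
      (fun t => ((hdi 0 t).sub ((hasDerivAt_id t).const_mul _)).differentiableAt)
      (fun t => by
        have := ((hdi 0 t).sub ((hasDerivAt_id t).const_mul (deriv γ 0 0))).deriv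
        rw [ha t, mul_one, sub_self] at this
        exact this) t 0
    simp only [mul_zero, sub_zero] at h
    linarith
  set G : ℝ → ℝ := fun s => ∑ i, ∑ j, v i * v j * g (γ (τ s)) i j with hG
  have hGγ : ∀ t, ∑ i, ∑ j, deriv γ t i * deriv γ t j * g (γ t) i j
      = deriv γ 0 0 ^ 2 * G (deriv γ 0 0 * t + γ 0 0) := fun t => by
    rw [← haff]
    simp only [hG, hτl, Finset.mul_sum]
    refine Finset.sum_congr rfl fun i _ => Finset.sum_congr rfl fun j _ => ?_
    rw [hγv t i, hγv t j, ha t]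
    ring
  rw [hint g hg]
  rw [integral_congr_ae (.of_forall hGγ)]
  change c * ∫ s, G s = _
  rw [integral_const_mul, Measure.integral_comp_mul_left (fun s => G (s + γ 0 0)),
    integral_add_right_eq_self G, abs_of_pos (inv_pos.2 hpos), smul_eq_mul]
  field_simp
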